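/- Lipschitz continuity of the limiting projection in its second argument: let Σ be a symmetric positive definite real p×p matrix and β ∈ Q, and let Θ_{Q,Σ}(β, x) = lim_{n→∞} (P_{Q,Σ}(nβ + x) − nβ), which exists for every x ∈ ℝ^p. Then for all x, y ∈ ℝ^p, (Θ_{Q,Σ}(β,x) − Θ_{Q,Σ}(β,y))ᵀ Σ (Θ_{Q,Σ}(β,x) − Θ_{Q,Σ}(β,y)) ≤ (x − y)ᵀ Σ (x − y); in particular x ↦ Θ_{Q,Σ}(β, x) is continuous. -/

import Mathlib

open Matrix

/-- The metric projection `P_{C,Σ}(x) = argmin_{β ∈ C} (β - x)ᵀ Σ (β - x)`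
(chosen via the axiom of choice; for `Σ` positive definite and `C` nonempty
closed convex it is the unique minimizer). -/
noncomputable def metricProj {p : ℕ} (S : Matrix (Fin p) (Fin p) ℝ)
    (C : Set (Fin p → ℝ)) (x : Fin p → ℝ) : Fin p → ℝ :=
  Classical.epsilon fun γ => γ ∈ C ∧ ∀ β ∈ C,
    (γ - x) ⬝ᵥ S.mulVec (γ - x) ≤ (β - x) ⬝ᵥ S.mulVec (β - x)

/-- The constraint cone `Q = {β ∈ ℝ^p : β_j ≥ 0 for j = 1,…,q}`. -/
def coneQ (p q : ℕ) : Set (Fin p → ℝ) :=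
  {v | ∀ j : Fin p, (j : ℕ) < q → 0 ≤ v j}


lemma quad_coercive {p : ℕ} (S : Matrix (Fin p) (Fin p) ℝ) (hpd : S.PosDef) :
    ∃ c : ℝ, 0 < c ∧ ∀ v : Fin p → ℝ, c * ‖v‖ ^ 2 ≤ v ⬝ᵥ S.mulVec v := by
  have hcont : Continuous fun v : Fin p → ℝ => v ⬝ᵥ S.mulVec v := by fun_prop
  have hpos : ∀ v : Fin p → ℝ, v ≠ 0 → 0 < v ⬝ᵥ S.mulVec v := by
    intro v hv
    simpa using hpd.dotProduct_mulVec_pos hv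
  rcases (Metric.sphere (0 : Fin p → ℝ) 1).eq_empty_or_nonempty with he | hne
  · refine ⟨1, one_pos, fun v => ?_⟩
    by_cases hv : v = 0
    · simp [hv]
    · exfalso
      have : (‖v‖⁻¹ • v) ∈ Metric.sphere (0 : Fin p → ℝ) 1 := by
        simp [norm_smul, hv]
      rw [he] at this
      exact this
  · obtain ⟨u, hu, hmin⟩ := (isCompact_sphere (0 : Fin p → ℝ) 1).exists_isMinOn hne
      hcont.continuousOn
    have hu0 : u ≠ 0 := by
      rintro rfl
      simp at hu
    refine ⟨_, hpos u hu0, fun v => ?_⟩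
    by_cases hv : v = 0
    · simp [hv]
    · have hm : (‖v‖⁻¹ • v) ∈ Metric.sphere (0 : Fin p → ℝ) 1 := by
        simp [norm_smul, hv]
      have h1 := hmin hm
      simp only [Set.mem_ofPred_eq, mulVec_smul, smul_dotProduct, dotProduct_smul,
        smul_eq_mul] at h1
      have hn : 0 < ‖v‖ := norm_pos_iff.mpr hv
      calc _ ≤ (‖v‖⁻¹ * (‖v‖⁻¹ * (v ⬝ᵥ S.mulVec v))) * ‖v‖ ^ 2 := by gcongr
        _ = _ := by field_simp

lemma metricProj_spec {p : ℕ} (S : Matrix (Fin p) (Fin p) ℝ) (hpd : S.PosDef)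
    (C : Set (Fin p → ℝ)) (hC : IsClosed C) (hne : C.Nonempty) (x : Fin p → ℝ) :
    metricProj S C x ∈ C ∧ ∀ β ∈ C,
      (metricProj S C x - x) ⬝ᵥ S.mulVec (metricProj S C x - x)
        ≤ (β - x) ⬝ᵥ S.mulVec (β - x) := by
  unfold metricProj
  apply Classical.epsilon_spec (p := fun γ => γ ∈ C ∧ ∀ β ∈ C,
    (γ - x) ⬝ᵥ S.mulVec (γ - x) ≤ (β - x) ⬝ᵥ S.mulVec (β - x))
  obtain ⟨c, hc, hcoer⟩ := quad_coercive S hpd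
  obtain ⟨x₀, hx₀⟩ := hne
  have hcont : Continuous fun v : Fin p → ℝ => (v - x) ⬝ᵥ S.mulVec (v - x) := by fun_prop
  have htend : Filter.Tendsto (fun v : Fin p → ℝ => (v - x) ⬝ᵥ S.mulVec (v - x))
      (Filter.cocompact _) Filter.atTop := by
    refine Filter.tendsto_atTop_mono (fun v => hcoer (v - x)) ?_
    refine Filter.Tendsto.const_mul_atTop hc ?_
    refine (Filter.tendsto_pow_atTop two_ne_zero).comp ?_
    refine Filter.tendsto_atTop_mono (fun v => norm_sub_norm_le v x) ?_
    exact Filter.tendsto_atTop_add_const_right _ (-‖x‖) (tendsto_norm_cocompact_atTop)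
  obtain ⟨γ, hγ, hmin⟩ := hcont.continuousOn.exists_isMinOn' hC hx₀
    ((htend.eventually_ge_atTop _).filter_mono inf_le_left)
  exact ⟨γ, hγ, fun b hb => hmin hb⟩

lemma bil_symm {p : ℕ} (S : Matrix (Fin p) (Fin p) ℝ) (hsymm : S.IsSymm)
    (u v : Fin p → ℝ) : u ⬝ᵥ S.mulVec v = v ⬝ᵥ S.mulVec u := by
  rw [dotProduct_mulVec, ← mulVec_transpose, hsymm.eq, dotProduct_comm]

lemma metricProj_var {p : ℕ} (S : Matrix (Fin p) (Fin p) ℝ) (hsymm : S.IsSymm)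
    (C : Set (Fin p → ℝ)) (hC : Convex ℝ C) (x g b : Fin p → ℝ) (hg : g ∈ C) (hb : b ∈ C)
    (hmin : ∀ β ∈ C, (g - x) ⬝ᵥ S.mulVec (g - x) ≤ (β - x) ⬝ᵥ S.mulVec (β - x)) :
    0 ≤ (g - x) ⬝ᵥ S.mulVec (b - g) := by
  by_contra! hlt
  set a := (g - x) ⬝ᵥ S.mulVec (b - g) with ha
  set d := (b - g) ⬝ᵥ S.mulVec (b - g) with hd
  have key : ∀ t : ℝ, 0 < t → t ≤ 1 → 0 ≤ 2 * a + t * d := by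
    intro t ht ht1
    have h := hmin _ (hC.add_smul_sub_mem hg hb ⟨ht.le, ht1⟩)
    have e : g + t • (b - g) - x = (g - x) + t • (b - g) := by abel
    rw [e] at h
    simp only [mulVec_add, mulVec_smul, add_dotProduct, dotProduct_add, smul_dotProduct,
      dotProduct_smul, smul_eq_mul] at h
    rw [bil_symm S hsymm (b - g) (g - x), ← ha, ← hd] at h
    have : 0 ≤ t * (2 * a + t * d) := by linarith
    exact nonneg_of_mul_nonneg_right this ht
  have hlim : Filter.Tendsto (fun t : ℝ => 2 * a + t * d) (nhdsWithin 0 (Set.Ioi 0))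
      (nhds (2 * a + 0 * d)) :=
    (Continuous.tendsto (by fun_prop) 0).mono_left nhdsWithin_le_nhds
  have : 0 ≤ 2 * a + 0 * d := by
    refine ge_of_tendsto hlim ?_
    filter_upwards [Ioc_mem_nhdsGT (zero_lt_one' ℝ)] with t ht
    exact key t ht.1 ht.2
  linarith

lemma metricProj_nonexp {p : ℕ} (S : Matrix (Fin p) (Fin p) ℝ) (hsymm : S.IsSymm)
    (hpd : S.PosDef) (C : Set (Fin p → ℝ)) (hC : Convex ℝ C) (hcl : IsClosed C)
    (hne : C.Nonempty) (x y : Fin p → ℝ) :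
    (metricProj S C x - metricProj S C y) ⬝ᵥ S.mulVec (metricProj S C x - metricProj S C y)
      ≤ (x - y) ⬝ᵥ S.mulVec (x - y) := by
  obtain ⟨hx, hxm⟩ := metricProj_spec S hpd C hcl hne x
  obtain ⟨hy, hym⟩ := metricProj_spec S hpd C hcl hne y
  have h1 := metricProj_var S hsymm C hC x _ _ hx hy hxm
  have h2 := metricProj_var S hsymm C hC y _ _ hy hx hym
  generalize metricProj S C x = g at *
  generalize metricProj S C y = k at *
  obtain ⟨c, hc, hcoer⟩ := quad_coercive S hpd
  have h3 : 0 ≤ ((x - y) - (g - k)) ⬝ᵥ S.mulVec ((x - y) - (g - k)) :=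
    le_trans (by positivity) (hcoer _)
  have e1 : (g - x) ⬝ᵥ S.mulVec (k - g) = - ((g - x) ⬝ᵥ S.mulVec (g - k)) := by
    rw [← neg_sub g k, mulVec_neg, dotProduct_neg]
  have e2 : (g - k) ⬝ᵥ S.mulVec (g - k) - (x - y) ⬝ᵥ S.mulVec (g - k)
      = (g - x) ⬝ᵥ S.mulVec (g - k) - (k - y) ⬝ᵥ S.mulVec (g - k) := by
    rw [← sub_dotProduct, ← sub_dotProduct]
    congr 1
    abel
  have e3 : ((x - y) - (g - k)) ⬝ᵥ S.mulVec ((x - y) - (g - k))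
      = (x - y) ⬝ᵥ S.mulVec (x - y) - 2 * ((x - y) ⬝ᵥ S.mulVec (g - k))
        + (g - k) ⬝ᵥ S.mulVec (g - k) := by
    generalize x - y = u
    generalize g - k = w
    rw [mulVec_sub, sub_dotProduct, dotProduct_sub, dotProduct_sub, bil_symm S hsymm w u]
    ring
  linarith

lemma coneQ_convex (p q : ℕ) : Convex ℝ (coneQ p q) := by
  intro u hu v hv a b ha hb _ j hj
  have := hu j hj
  have := hv j hj
  simp only [Pi.add_apply, Pi.smul_apply, smul_eq_mul]
  positivity

lemma coneQ_closed (p q : ℕ) : IsClosed (coneQ p q) := by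
  simp only [coneQ, Set.ofPred_forall]
  refine isClosed_iInter fun j => isClosed_iInter fun _ => ?_
  exact isClosed_le continuous_const (continuous_apply j)

/-- Lipschitz continuity of the limiting projection
`Θ_{Q,Σ}(β,·)` in its second argument, and continuity of `Θ_{Q,Σ}(β,·)`. -/
theorem limiting_projection_lipschitz {p q : ℕ} (hq : 1 ≤ q) (hqp : q ≤ p)
    (S : Matrix (Fin p) (Fin p) ℝ) (hsymm : S.IsSymm) (hpd : S.PosDef)
    (β : Fin p → ℝ) (hβ : β ∈ coneQ p q)
    (Θ : (Fin p → ℝ) → (Fin p → ℝ))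
    (hΘ : ∀ x : Fin p → ℝ,
      Filter.Tendsto
        (fun n : ℕ => metricProj S (coneQ p q) ((n : ℝ) • β + x) - (n : ℝ) • β)
        Filter.atTop (nhds (Θ x))) :
    (∀ x y : Fin p → ℝ,
      (Θ x - Θ y) ⬝ᵥ S.mulVec (Θ x - Θ y) ≤ (x - y) ⬝ᵥ S.mulVec (x - y)) ∧
    Continuous Θ := by
  have hlip : ∀ x y : Fin p → ℝ,
      (Θ x - Θ y) ⬝ᵥ S.mulVec (Θ x - Θ y) ≤ (x - y) ⬝ᵥ S.mulVec (x - y) := by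
    intro x y
    have hcont : Continuous fun v : Fin p → ℝ => v ⬝ᵥ S.mulVec v := by fun_prop
    refine le_of_tendsto ((hcont.tendsto _).comp ((hΘ x).sub (hΘ y)))
      (Filter.Eventually.of_forall fun n => ?_)
    have h := metricProj_nonexp S hsymm hpd (coneQ p q) (coneQ_convex p q) (coneQ_closed p q)
      ⟨β, hβ⟩ ((n : ℝ) • β + x) ((n : ℝ) • β + y)
    simpa only [Function.comp, sub_sub_sub_cancel_right, add_sub_add_left_eq_sub] using h
  refine ⟨hlip, ?_⟩
  obtain ⟨c, hc, hcoer⟩ := quad_coercive S hpd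
  rw [continuous_iff_continuousAt]
  intro y
  rw [ContinuousAt, tendsto_iff_norm_sub_tendsto_zero]
  have hcont : Continuous fun x : Fin p → ℝ =>
      Real.sqrt (((x - y) ⬝ᵥ S.mulVec (x - y)) / c) := by fun_prop
  have h0 := hcont.tendsto y
  simp only [sub_self, mulVec_zero, dotProduct_zero, zero_div, Real.sqrt_zero] at h0
  refine squeeze_zero (fun _ => norm_nonneg _) (fun x => ?_) h0
  apply Real.le_sqrt_of_sq_le
  rw [le_div_iff₀ hc, mul_comm]
  exact (hcoer _).trans (hlip x y)
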